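/- For m = 17 (where the multiplicative order of 2 modulo 17 is h = 8), the exact exponent α(17) = max_{1 ≤ l ≤ 16} ( 1 + (1/(8·ln 2)) · Σ_{k=0}^{7} ln |sin(π l 2^k / 17)| ) equals ln(17 + 4√17) / ln 256, and this maximum is attained at l = 3 (and not at l = 1). -/

import Mathlib

/-!
Put `ζ = exp (2πi l / 17)`. Since `‖1 - exp (ix)‖ = 2 |sin (x / 2)|`, the exponent attached to `l`
is the logarithm of `‖∏_{k < 8} (1 - ζ ^ 2 ^ k)‖` divided by `8 ln 2`. The powers of `2` are the
squares modulo `17`, so this product is a polynomial in the quadratic Gauss period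
`S = ∑_{k < 8} ζ ^ 2 ^ k`: it equals `13 - 8 S = 17 - 4 (2 S + 1)`. Here `2 S + 1` is the quadratic
Gauss sum, whose square is `17`, so the only two possible exponents are `ln (17 ∓ 4√17) / ln 256`.
The Gauss sum is positive for `l = 1`, and its sign changes for `l = 3` because `3` is not a square
modulo `17`. The relations between periods are obtained, as by Gauss, from the finer periods over
the fourth powers modulo `17`.
-/

open Complex Finset
open scoped Real

/-- The expression maximised over `l` in `α(m)`, with `h(m)` encoded as the order of `2` in
`ZMod m`. -/
noncomputable def sineExponent (m l : ℕ) : ℝ :=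
  1 + (1 / (orderOf (2 : ZMod m) * Real.log 2)) *
    ∑ k ∈ range (orderOf (2 : ZMod m)), Real.log |Real.sin (π * l * 2 ^ k / m)|

lemma norm_one_sub_exp_ofReal_mul_I (x : ℝ) : ‖1 - exp (x * I)‖ = 2 * |Real.sin (x / 2)| := by
  rw [norm_sub_rev, mul_comm, norm_exp_I_mul_ofReal_sub_one, Real.norm_eq_abs, abs_mul, abs_two]

lemma orderOf_two_zmod_ne_zero {m : ℕ} (hm : Odd m) : orderOf (2 : ZMod m) ≠ 0 := by
  have : NeZero m := ⟨hm.pos.ne'⟩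
  have hunit : IsUnit ((2 : ℕ) : ZMod m) :=
    (ZMod.isUnit_iff_coprime 2 m).2 (Nat.coprime_two_left.2 hm)
  exact hunit.isOfFinOrder.orderOf_pos.ne'

lemma one_sub_pow_two_pow_ne_zero {R : Type*} [CommRing R] {ξ : R} {m l : ℕ}
    (hξ : IsPrimitiveRoot ξ m) (hm : Odd m) (hl : ¬ m ∣ l) (k : ℕ) :
    1 - (ξ ^ l) ^ 2 ^ k ≠ 0 := by
  rw [sub_ne_zero, ne_comm, ← pow_mul, Ne, hξ.pow_eq_one_iff_dvd]
  exact fun h => hl (((Nat.coprime_two_right.2 hm).pow_right k).dvd_of_dvd_mul_right h)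

lemma norm_one_sub_exp_pow (m n : ℕ) :
    ‖1 - exp (2 * π * I / m) ^ n‖ = 2 * |Real.sin (π * n / m)| := by
  have harg : exp (2 * π * I / m) ^ n = exp ((2 * (π * n / m) : ℝ) * I) := by
    rw [← exp_nat_mul]
    push_cast
    ring_nf
  rw [harg, norm_one_sub_exp_ofReal_mul_I, mul_div_cancel_left₀ _ two_ne_zero]

theorem sineExponent_eq_log_norm_prod {m l : ℕ} (hm : Odd m) (hl : ¬ m ∣ l) :
    sineExponent m l =
      Real.log ‖∏ k ∈ range (orderOf (2 : ZMod m)), (1 - (exp (2 * π * I / m) ^ l) ^ 2 ^ k)‖ /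
        (orderOf (2 : ZMod m) * Real.log 2) := by
  have hfactor (k : ℕ) : Real.log ‖1 - (exp (2 * π * I / m) ^ l) ^ 2 ^ k‖ =
      Real.log 2 + Real.log |Real.sin (π * l * 2 ^ k / m)| := by
    have hne := norm_ne_zero_iff.2 <|
      one_sub_pow_two_pow_ne_zero (isPrimitiveRoot_exp m hm.pos.ne') hm hl k
    rw [← pow_mul, norm_one_sub_exp_pow, Nat.cast_mul, Nat.cast_pow, Nat.cast_ofNat,
      ← mul_assoc] at hne ⊢
    exact Real.log_mul two_ne_zero (right_ne_zero_of_mul hne)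
  have hden : (orderOf (2 : ZMod m) : ℝ) * Real.log 2 ≠ 0 :=
    mul_ne_zero (Nat.cast_ne_zero.2 (orderOf_two_zmod_ne_zero hm)) (Real.log_pos one_lt_two).ne'
  rw [norm_prod, Real.log_prod fun k _ => norm_ne_zero_iff.2 <|
      one_sub_pow_two_pow_ne_zero (isPrimitiveRoot_exp m hm.pos.ne') hm hl k,
    sum_congr rfl fun k _ => hfactor k, sum_add_distrib, sum_const, card_range, nsmul_eq_mul,
    add_div, div_self hden, sineExponent, one_div_mul_eq_div]

section Periods

variable {R : Type*} [CommRing R] {ζ : R}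

/-- For a primitive 17th root of unity `ζ`, the Gauss period over the squares modulo `17`, which are
the powers of `2`. -/
def quadraticPeriod (ζ : R) : R := ∑ k ∈ range 8, ζ ^ 2 ^ k

/-- For a primitive 17th root of unity `ζ`, the Gauss period over the fourth powers modulo `17`,
which are the powers of `4`. The conjugate periods are obtained at `ζ ^ 2`, `ζ ^ 3` and `ζ ^ 6`. -/
def quarticPeriod (ζ : R) : R := ∑ k ∈ range 4, ζ ^ 4 ^ k

lemma quadraticPeriod_eq_quarticPeriod_add (ζ : R) :
    quadraticPeriod ζ = quarticPeriod ζ + quarticPeriod (ζ ^ 2) := by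
  simp only [quadraticPeriod, quarticPeriod, sum_range_succ, sum_range_zero]
  ring

lemma prod_one_sub_pow_two_pow (ζ : R) :
    ∏ k ∈ range 8, (1 - ζ ^ 2 ^ k) =
      (∏ k ∈ range 4, (1 - ζ ^ 4 ^ k)) * ∏ k ∈ range 4, (1 - (ζ ^ 2) ^ 4 ^ k) := by
  simp only [prod_range_succ, prod_range_zero]
  ring

lemma quarticPeriod_pow_four (hζ : ζ ^ 17 = 1) : quarticPeriod (ζ ^ 4) = quarticPeriod ζ := by
  simp only [quarticPeriod, sum_range_succ, sum_range_zero]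
  grind

lemma quarticPeriod_sq (hζ : ζ ^ 17 = 1) :
    quarticPeriod ζ ^ 2 = 4 + quarticPeriod (ζ ^ 2) + 2 * quarticPeriod (ζ ^ 3) := by
  simp only [quarticPeriod, sum_range_succ, sum_range_zero]
  grind

lemma quarticPeriod_mul_pow_six (hζ : ζ ^ 17 = 1) :
    quarticPeriod ζ * quarticPeriod (ζ ^ 6) =
      quarticPeriod (ζ ^ 2) + quarticPeriod (ζ ^ 3) + 2 * quarticPeriod (ζ ^ 6) := by
  simp only [quarticPeriod, sum_range_succ, sum_range_zero]
  grind

lemma prod_one_sub_pow_four_pow (hζ : ζ ^ 17 = 1) :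
    ∏ k ∈ range 4, (1 - ζ ^ 4 ^ k) = 4 - 2 * quarticPeriod ζ + quarticPeriod (ζ ^ 3) := by
  simp only [quarticPeriod, prod_range_succ, prod_range_zero, sum_range_succ, sum_range_zero]
  grind

variable [IsDomain R]

lemma sum_quarticPeriod (hζ : IsPrimitiveRoot ζ 17) :
    quarticPeriod ζ + quarticPeriod (ζ ^ 2) + quarticPeriod (ζ ^ 3) + quarticPeriod (ζ ^ 6) =
      -1 := by
  have hgeom := hζ.geom_sum_eq_zero (by norm_num)
  simp only [quarticPeriod, sum_range_succ, sum_range_zero] at hgeom ⊢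
  grind [hζ.pow_eq_one]

lemma quarticPeriod_mul_pow_two (hζ : IsPrimitiveRoot ζ 17) :
    quarticPeriod ζ * quarticPeriod (ζ ^ 2) = -1 := by
  rw [← sum_quarticPeriod hζ]
  simp only [quarticPeriod, sum_range_succ, sum_range_zero]
  grind [hζ.pow_eq_one]

lemma quadraticPeriod_add_pow_three (hζ : IsPrimitiveRoot ζ 17) :
    quadraticPeriod ζ + quadraticPeriod (ζ ^ 3) = -1 := by
  rw [quadraticPeriod_eq_quarticPeriod_add, quadraticPeriod_eq_quarticPeriod_add, ← pow_mul]
  linear_combination sum_quarticPeriod hζ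

theorem two_mul_quadraticPeriod_add_one_sq (hζ : IsPrimitiveRoot ζ 17) :
    (2 * quadraticPeriod ζ + 1) ^ 2 = 17 := by
  have hsq := quarticPeriod_sq hζ.pow_eq_one
  have hsq_two : quarticPeriod (ζ ^ 2) ^ 2 =
      4 + quarticPeriod ζ + 2 * quarticPeriod (ζ ^ 6) := by
    rw [← quarticPeriod_pow_four hζ.pow_eq_one]
    simpa only [← pow_mul] using quarticPeriod_sq (hζ.pow_of_coprime 2 (by norm_num)).pow_eq_one
  have hmul := quarticPeriod_mul_pow_two hζ
  rw [quadraticPeriod_eq_quarticPeriod_add]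
  linear_combination 4 * hsq + 4 * hsq_two + 8 * hmul + 8 * sum_quarticPeriod hζ

theorem prod_one_sub_eq_quadraticPeriod (hζ : IsPrimitiveRoot ζ 17) :
    ∏ k ∈ range 8, (1 - ζ ^ 2 ^ k) = 13 - 8 * quadraticPeriod ζ := by
  have hζ_two := hζ.pow_of_coprime 2 (by norm_num)
  have hζ_three := hζ.pow_of_coprime 3 (by norm_num)
  have hmul_two := quarticPeriod_mul_pow_two hζ
  have hmul_three_six : quarticPeriod (ζ ^ 3) * quarticPeriod (ζ ^ 6) = -1 := by
    simpa only [← pow_mul] using quarticPeriod_mul_pow_two hζ_three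
  have hmul_six := quarticPeriod_mul_pow_six hζ.pow_eq_one
  have hmul_two_three : quarticPeriod (ζ ^ 2) * quarticPeriod (ζ ^ 3) =
      quarticPeriod ζ + quarticPeriod (ζ ^ 6) + 2 * quarticPeriod (ζ ^ 3) := by
    rw [← quarticPeriod_pow_four hζ.pow_eq_one, ← quarticPeriod_pow_four hζ_three.pow_eq_one]
    simpa only [← pow_mul] using quarticPeriod_mul_pow_six hζ_two.pow_eq_one
  rw [prod_one_sub_pow_two_pow, prod_one_sub_pow_four_pow hζ.pow_eq_one,
    prod_one_sub_pow_four_pow hζ_two.pow_eq_one, ← pow_mul, quadraticPeriod_eq_quarticPeriod_add]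
  linear_combination 4 * hmul_two - 2 * hmul_six - 2 * hmul_two_three + hmul_three_six -
    2 * sum_quarticPeriod hζ

end Periods

lemma orderOf_two_zmod_seventeen : orderOf (2 : ZMod 17) = 8 :=
  orderOf_eq_prime_pow (p := 2) (n := 2) (by decide) (by decide)

lemma isPrimitiveRoot_exp_seventeen : IsPrimitiveRoot (exp (2 * π * I / 17)) 17 :=
  mod_cast isPrimitiveRoot_exp 17 (by norm_num)

lemma isPrimitiveRoot_exp_pow_seventeen {l : ℕ} (hl : ¬ 17 ∣ l) :
    IsPrimitiveRoot (exp (2 * π * I / 17) ^ l) 17 :=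
  isPrimitiveRoot_exp_seventeen.pow_of_coprime l
    ((Nat.Prime.coprime_iff_not_dvd (by norm_num)).2 hl).symm

lemma sineExponent_seventeen_of_period {l : ℕ} (hl : ¬ 17 ∣ l) {τ : ℝ}
    (hτ : 2 * quadraticPeriod (exp (2 * π * I / 17) ^ l) + 1 = τ) :
    sineExponent 17 l = Real.log (17 - 4 * τ) / Real.log 256 := by
  have hprod : ∏ k ∈ range 8, (1 - (exp (2 * π * I / 17) ^ l) ^ 2 ^ k) =
      ((17 - 4 * τ : ℝ) : ℂ) := by
    rw [prod_one_sub_eq_quadraticPeriod (isPrimitiveRoot_exp_pow_seventeen hl)]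
    push_cast
    linear_combination -4 * hτ
  have hlog : (8 : ℝ) * Real.log 2 = Real.log 256 := by
    rw [← Real.log_rpow two_pos]
    norm_num
  rw [sineExponent_eq_log_norm_prod (by decide) hl, orderOf_two_zmod_seventeen, Nat.cast_ofNat,
    Nat.cast_ofNat, hprod, norm_real, Real.norm_eq_abs, Real.log_abs, hlog]

lemma two_mul_quadraticPeriod_add_one_eq_sqrt_or_neg {ζ : ℂ} (hζ : IsPrimitiveRoot ζ 17) :
    2 * quadraticPeriod ζ + 1 = √17 ∨ 2 * quadraticPeriod ζ + 1 = -√17 := by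
  rw [← sq_eq_sq_iff_eq_or_eq_neg, two_mul_quadraticPeriod_add_one_sq hζ, ← ofReal_pow,
    Real.sq_sqrt (by norm_num), ofReal_ofNat]

lemma re_pow_two_pow_add_four {ζ : ℂ} (hζ : ζ ^ 17 = 1) (k : ℕ) :
    (ζ ^ 2 ^ (k + 4)).re = (ζ ^ 2 ^ k).re := by
  have hmul : ζ ^ 2 ^ (k + 4) * ζ ^ 2 ^ k = 1 := by
    rw [← pow_add, show 2 ^ (k + 4) + 2 ^ k = 17 * 2 ^ k by ring, pow_mul, hζ, one_pow]
  have hnorm : ‖ζ ^ 2 ^ k‖ = 1 := by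
    rw [norm_pow, norm_eq_one_of_pow_eq_one hζ (by norm_num), one_pow]
  rw [eq_inv_of_mul_eq_one_left hmul, inv_eq_conj hnorm, conj_re]

lemma quadraticPeriod_re {ζ : ℂ} (hζ : ζ ^ 17 = 1) :
    (quadraticPeriod ζ).re = 2 * ∑ k ∈ range 4, (ζ ^ 2 ^ k).re := by
  rw [quadraticPeriod, re_sum, sum_range_add _ 4 4, two_mul]
  simp only [add_comm 4, re_pow_two_pow_add_four hζ]

lemma exp_pow_re (m n : ℕ) :
    (exp (2 * π * I / m) ^ n).re = Real.cos (2 * π * n / m) := by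
  rw [← exp_ofReal_mul_I_re, ← exp_nat_mul]
  push_cast
  ring_nf

lemma neg_two_le_quadraticPeriod_exp_re :
    -2 ≤ (quadraticPeriod (exp (2 * π * I / 17))).re := by
  have hre (k : ℕ) := exp_pow_re 17 (2 ^ k)
  have hcos_nonneg : ∀ k ∈ range 3, 0 ≤ Real.cos (2 * π * 2 ^ k / 17) := by
    intro k hk
    have hpow : (2 : ℝ) ^ k ≤ 2 ^ 2 := pow_le_pow_right₀ one_le_two (by grind)
    refine Real.cos_nonneg_of_neg_pi_div_two_le_of_le ?_ ?_
    · linarith [Real.pi_pos, show 0 ≤ 2 * π * 2 ^ k / 17 by positivity]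
    · nlinarith [Real.pi_pos]
  rw [quadraticPeriod_re isPrimitiveRoot_exp_seventeen.pow_eq_one, sum_range_succ]
  push_cast at hre
  simp only [hre]
  linarith [sum_nonneg hcos_nonneg, Real.neg_one_le_cos (2 * π * 2 ^ 3 / 17)]

lemma two_mul_quadraticPeriod_exp_add_one :
    2 * quadraticPeriod (exp (2 * π * I / 17)) + 1 = √17 := by
  refine (two_mul_quadraticPeriod_add_one_eq_sqrt_or_neg
    isPrimitiveRoot_exp_seventeen).resolve_right fun hneg => ?_
  have hre := congrArg re hneg
  have hsqrt : 3 < √17 := Real.lt_sqrt_of_sq_lt (by norm_num)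
  simp only [add_re, mul_re, re_ofNat, im_ofNat, zero_mul, sub_zero, one_re, neg_re, ofReal_re]
    at hre
  linarith [neg_two_le_quadraticPeriod_exp_re]

lemma sineExponent_seventeen_one :
    sineExponent 17 1 = Real.log (17 - 4 * √17) / Real.log 256 :=
  sineExponent_seventeen_of_period (by norm_num)
    (by rw [pow_one, two_mul_quadraticPeriod_exp_add_one])

lemma sineExponent_seventeen_three :
    sineExponent 17 3 = Real.log (17 + 4 * √17) / Real.log 256 := by
  rw [sineExponent_seventeen_of_period (τ := -√17) (by norm_num), mul_neg, sub_neg_eq_add]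
  push_cast
  linear_combination 2 * quadraticPeriod_add_pow_three isPrimitiveRoot_exp_seventeen -
    two_mul_quadraticPeriod_exp_add_one

lemma log_seventeen_sub_div_lt :
    Real.log (17 - 4 * √17) / Real.log 256 < Real.log (17 + 4 * √17) / Real.log 256 := by
  have hpos : 0 < √17 := by positivity
  have hlt : √17 < 17 / 4 := by rw [Real.sqrt_lt'] <;> norm_num
  exact div_lt_div_of_pos_right (Real.log_lt_log (by linarith) (by linarith))
    (Real.log_pos (by norm_num))

lemma sineExponent_seventeen_le {l : ℕ} (hl : ¬ 17 ∣ l) :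
    sineExponent 17 l ≤ Real.log (17 + 4 * √17) / Real.log 256 := by
  obtain h | h := two_mul_quadraticPeriod_add_one_eq_sqrt_or_neg
    (isPrimitiveRoot_exp_pow_seventeen hl)
  · exact (sineExponent_seventeen_of_period hl h).trans_le log_seventeen_sub_div_lt.le
  · rw [sineExponent_seventeen_of_period (τ := -√17) hl (by rw [h, ofReal_neg]), mul_neg,
      sub_neg_eq_add]

/-- Example (m = 17): with `h = 8` the multiplicative order of `2` mod `17`, the
exponent `α(17) = max_{1 ≤ l ≤ 16} (1 + (1/(8 ln 2)) Σ_{k<8} ln |sin(π l 2^k/17)|)`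
equals `ln(17 + 4√17)/ln 256`, the maximum being attained at `l = 3` but not at
`l = 1`. -/
theorem alpha_seventeen :
    orderOf (2 : ZMod 17) = 8 ∧
    IsGreatest { y : ℝ | ∃ l ∈ Finset.Icc (1 : ℕ) 16,
        y = 1 + (1 / (8 * Real.log 2)) *
          ∑ k ∈ Finset.range 8, Real.log |Real.sin (Real.pi * l * 2 ^ k / 17)| }
      (Real.log (17 + 4 * Real.sqrt 17) / Real.log 256) ∧
    (1 + (1 / (8 * Real.log 2)) *
        ∑ k ∈ Finset.range 8, Real.log |Real.sin (Real.pi * (3 : ℕ) * 2 ^ k / 17)| =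
      Real.log (17 + 4 * Real.sqrt 17) / Real.log 256) ∧
    (1 + (1 / (8 * Real.log 2)) *
        ∑ k ∈ Finset.range 8, Real.log |Real.sin (Real.pi * (1 : ℕ) * 2 ^ k / 17)| ≠
      Real.log (17 + 4 * Real.sqrt 17) / Real.log 256) := by
  have hexp (l : ℕ) : 1 + (1 / (8 * Real.log 2)) *
      ∑ k ∈ range 8, Real.log |Real.sin (Real.pi * l * 2 ^ k / 17)| = sineExponent 17 l := by
    rw [sineExponent, orderOf_two_zmod_seventeen, Nat.cast_ofNat, Nat.cast_ofNat]
  simp only [hexp]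
  refine ⟨orderOf_two_zmod_seventeen, ⟨⟨3, by simp, sineExponent_seventeen_three.symm⟩, ?_⟩,
    sineExponent_seventeen_three, sineExponent_seventeen_one.trans_ne log_seventeen_sub_div_lt.ne⟩
  rintro _ ⟨l, hl, rfl⟩
  exact sineExponent_seventeen_le (by grind)
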